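/- Let t, s > 0 with t + s > 1, let u ∈ (Σ_t^s)'(R^m) and v ∈ (Σ_t^s)'(R^n). Then WF^{t,s}(u ⊗ v) ⊆ { (x,ξ) ∈ T*R^{m+n} \ 0 : (x',ξ') ∈ WF^{t,s}(u) ∪ {0} and (x'',ξ'') ∈ WF^{t,s}(v) ∪ {0} }, writing x = (x',x'') with x' ∈ R^m, x'' ∈ R^n and similarly for ξ. -/

import Mathlib

open Real

/-- The anisotropic `(t,s)`-Gelfand–Shilov wave front set of an ultradistribution,
expressed via its short-time Fourier transform `V` (with respect to a fixed
window): `z ∉ WF^{t,s}` iff `z = 0` or there is a neighborhood `U` of `z` such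
that for every `r > 0`, `e^{rλ} |V(λ^t x, λ^s ξ)|` is bounded over `λ > 0` and
`(x,ξ) ∈ U`. -/
def GSWaveFrontSet {F G : Type*} [NormedAddCommGroup F] [NormedSpace ℝ F]
    [NormedAddCommGroup G] [NormedSpace ℝ G] (t s : ℝ) (V : F × G → ℂ) :
    Set (F × G) :=
  {z | z ≠ 0 ∧ ¬ ∃ U : Set (F × G), IsOpen U ∧ z ∈ U ∧
    ∀ r : ℝ, 0 < r → ∃ C : ℝ, ∀ l : ℝ, 0 < l → ∀ w ∈ U,
      Real.exp (r * l) * ‖V (l ^ t • w.1, l ^ s • w.2)‖ ≤ C}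

/-!
The gauge `‖x‖ ^ (1 / t) + ‖ξ‖ ^ (1 / s)` is homogeneous of degree one under the dilations
`(x, ξ) ↦ (λ ^ t x, λ ^ s ξ)`. A function of at most exponential growth in the gauge is therefore
`O(e ^ (K λ))` along the dilates of a neighbourhood of any point. A factor that decays faster than
every `e ^ (-r λ)` near its component of `z` absorbs such growth of the other factor, so the tensor
product decays near `z`, and `z` can lie in its wave front set only if neither factor decays.
-/

open scoped Topology

section Gauge

variable {F G : Type*} [SeminormedAddCommGroup F] [SeminormedAddCommGroup G]

/-- The anisotropic gauge on phase space, in terms of which the growth of short-time Fourier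
transforms of ultradistributions is measured. -/
noncomputable def anisoGauge (t s : ℝ) (z : F × G) : ℝ :=
  ‖z.1‖ ^ (1 / t) + ‖z.2‖ ^ (1 / s)

lemma continuous_anisoGauge {t s : ℝ} (ht : 0 ≤ t) (hs : 0 ≤ s) :
    Continuous (anisoGauge t s : F × G → ℝ) :=
  (continuous_fst.norm.rpow_const fun _ => Or.inr (one_div_nonneg.2 ht)).add
    (continuous_snd.norm.rpow_const fun _ => Or.inr (one_div_nonneg.2 hs))

/-- At most exponential growth in the anisotropic gauge: the bound satisfied by the short-time
Fourier transform of an ultradistribution in `(Σ_t^s)'`. -/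
def HasExpGaugeGrowth {A : Type*} [Norm A] (t s : ℝ) (f : F × G → A) : Prop :=
  ∃ C r : ℝ, ∀ z, ‖f z‖ ≤ C * exp (r * anisoGauge t s z)

end Gauge

section Dilation

variable {F G F' G' : Type*}
  [SeminormedAddCommGroup F] [NormedSpace ℝ F] [SeminormedAddCommGroup G] [NormedSpace ℝ G]
  [SeminormedAddCommGroup F'] [NormedSpace ℝ F'] [SeminormedAddCommGroup G'] [NormedSpace ℝ G']
  {t s : ℝ}

/-- The anisotropic dilation `(x, ξ) ↦ (l ^ t x, l ^ s ξ)` of phase space, whose orbits replace the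
rays of the classical conic theory. -/
noncomputable def anisoDilation (t s l : ℝ) (z : F × G) : F × G :=
  (l ^ t • z.1, l ^ s • z.2)

lemma norm_rpow_smul_rpow_one_div {l p : ℝ} (hl : 0 ≤ l) (hp : p ≠ 0) (x : F) :
    ‖l ^ p • x‖ ^ (1 / p) = l * ‖x‖ ^ (1 / p) := by
  have hlp : 0 ≤ l ^ p := rpow_nonneg hl p
  rw [norm_smul, norm_of_nonneg hlp, mul_rpow hlp (norm_nonneg x), one_div, rpow_rpow_inv hl hp]

lemma anisoGauge_anisoDilation {l : ℝ} (ht : t ≠ 0) (hs : s ≠ 0) (hl : 0 ≤ l) (z : F × G) :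
    anisoGauge t s (anisoDilation t s l z) = l * anisoGauge t s z := by
  simp only [anisoGauge, anisoDilation, norm_rpow_smul_rpow_one_div hl ht,
    norm_rpow_smul_rpow_one_div hl hs, mul_add]

/-- `e ^ (r * l) * ‖f‖` is bounded, uniformly in `l > 0`, along the anisotropic dilates of `U`.
Negative rates `r` are allowed and express exponential growth rather than decay. -/
def DilationBoundedOn {A : Type*} [Norm A] (t s r : ℝ) (f : F × G → A) (U : Set (F × G)) : Prop :=
  ∃ C : ℝ, ∀ l : ℝ, 0 < l → ∀ w ∈ U, exp (r * l) * ‖f (anisoDilation t s l w)‖ ≤ C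

namespace DilationBoundedOn

lemma anti_rate {A : Type*} [SeminormedAddGroup A] {f : F × G → A} {U : Set (F × G)} {r r' : ℝ}
    (hf : DilationBoundedOn t s r f U) (hr : r' ≤ r) : DilationBoundedOn t s r' f U := by
  obtain ⟨C, hC⟩ := hf
  refine ⟨C, fun l hl w hw => le_trans ?_ (hC l hl w hw)⟩
  gcongr

lemma comp {A : Type*} [Norm A] {f : F' × G' → A} {U : Set (F' × G')} {r : ℝ}
    (hf : DilationBoundedOn t s r f U) {φ : F × G → F' × G'}
    (hφ : ∀ l w, φ (anisoDilation t s l w) = anisoDilation t s l (φ w)) :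
    DilationBoundedOn t s r (f ∘ φ) (φ ⁻¹' U) := by
  obtain ⟨C, hC⟩ := hf
  refine ⟨C, fun l hl w hw => ?_⟩
  simpa only [Function.comp_apply, hφ] using hC l hl (φ w) hw

lemma mul {A : Type*} [NonUnitalSeminormedRing A] {f g : F × G → A} {U W : Set (F × G)}
    {r r' : ℝ} (hf : DilationBoundedOn t s r f U) (hg : DilationBoundedOn t s r' g W) :
    DilationBoundedOn t s (r + r') (f * g) (U ∩ W) := by
  obtain ⟨C, hC⟩ := hf
  obtain ⟨C', hC'⟩ := hg
  refine ⟨C * C', fun l hl w ⟨hwU, hwW⟩ => ?_⟩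
  set z := anisoDilation t s l w
  have hfz : exp (r * l) * ‖f z‖ ≤ C := hC l hl w hwU
  have hgz : exp (r' * l) * ‖g z‖ ≤ C' := hC' l hl w hwW
  calc exp ((r + r') * l) * ‖f z * g z‖
      ≤ exp ((r + r') * l) * (‖f z‖ * ‖g z‖) := by gcongr; exact norm_mul_le _ _
    _ = (exp (r * l) * ‖f z‖) * (exp (r' * l) * ‖g z‖) := by rw [add_mul, exp_add]; ring
    _ ≤ C * C' := mul_le_mul hfz hgz (by positivity) (le_trans (by positivity) hfz)

end DilationBoundedOn

/-- Superexponential decay of `f` along the anisotropic dilates of a neighbourhood of `z`: the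
condition that excludes a nonzero `z` from the wave front set. The neighbourhood does not depend on
the rate `r`. -/
def DilationDecaysAt {A : Type*} [Norm A] (t s : ℝ) (f : F × G → A) (z : F × G) : Prop :=
  ∃ U ∈ 𝓝 z, ∀ r : ℝ, DilationBoundedOn t s r f U

/-- At most exponential growth of `f` along the anisotropic dilates of a neighbourhood of `z`; the
growth rate is `-r`. -/
def DilationGrowsAt {A : Type*} [Norm A] (t s : ℝ) (f : F × G → A) (z : F × G) : Prop :=
  ∃ U ∈ 𝓝 z, ∃ r : ℝ, DilationBoundedOn t s r f U

lemma DilationDecaysAt.comp {A : Type*} [Norm A] {f : F' × G' → A} {φ : F × G → F' × G'}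
    {z : F × G} (hf : DilationDecaysAt t s f (φ z)) (hφ : ContinuousAt φ z)
    (hφ_dil : ∀ l w, φ (anisoDilation t s l w) = anisoDilation t s l (φ w)) :
    DilationDecaysAt t s (f ∘ φ) z := by
  obtain ⟨U, hU, hdecay⟩ := hf
  exact ⟨φ ⁻¹' U, hφ hU, fun r => (hdecay r).comp hφ_dil⟩

lemma DilationGrowsAt.comp {A : Type*} [Norm A] {f : F' × G' → A} {φ : F × G → F' × G'}
    {z : F × G} (hf : DilationGrowsAt t s f (φ z)) (hφ : ContinuousAt φ z)
    (hφ_dil : ∀ l w, φ (anisoDilation t s l w) = anisoDilation t s l (φ w)) :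
    DilationGrowsAt t s (f ∘ φ) z := by
  obtain ⟨U, hU, r, hgrowth⟩ := hf
  exact ⟨φ ⁻¹' U, hφ hU, r, hgrowth.comp hφ_dil⟩

lemma DilationDecaysAt.mul_dilationGrowsAt {A : Type*} [NonUnitalSeminormedRing A]
    {f g : F × G → A} {z : F × G} (hf : DilationDecaysAt t s f z)
    (hg : DilationGrowsAt t s g z) : DilationDecaysAt t s (f * g) z := by
  obtain ⟨U, hU, hdecay⟩ := hf
  obtain ⟨W, hW, r', hgrowth⟩ := hg
  refine ⟨U ∩ W, Filter.inter_mem hU hW, fun r => ?_⟩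
  simpa only [sub_add_cancel] using (hdecay (r - r')).mul hgrowth

lemma HasExpGaugeGrowth.dilationGrowsAt {A : Type*} [SeminormedAddGroup A] {f : F × G → A}
    (ht : 0 < t) (hs : 0 < s) (hf : HasExpGaugeGrowth t s f) (z : F × G) :
    DilationGrowsAt t s f z := by
  obtain ⟨C, r, hfC⟩ := hf
  have hC : 0 ≤ C := nonneg_of_mul_nonneg_left ((norm_nonneg _).trans (hfC 0)) (exp_pos _)
  have hcont : Continuous fun w : F × G => r * anisoGauge t s w :=
    continuous_const.mul (continuous_anisoGauge ht.le hs.le)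
  obtain ⟨K, hK⟩ := exists_gt (r * anisoGauge t s z)
  refine ⟨{w | r * anisoGauge t s w < K}, hcont.continuousAt.eventually_lt_const hK, -K, C,
    fun l hl w (hw : r * anisoGauge t s w < K) => ?_⟩
  calc exp (-K * l) * ‖f (anisoDilation t s l w)‖
      ≤ exp (-K * l) * (C * exp (r * anisoGauge t s (anisoDilation t s l w))) := by
        gcongr; exact hfC _
    _ = exp (-K * l) * (C * exp (r * anisoGauge t s w * l)) := by
        rw [anisoGauge_anisoDilation ht.ne' hs.ne' hl.le, mul_assoc, mul_comm l]
    _ ≤ exp (-K * l) * (C * exp (K * l)) := by gcongr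
    _ = C := by rw [mul_left_comm, ← exp_add, neg_mul, neg_add_cancel, exp_zero, mul_one]

end Dilation

section WaveFrontSet

variable {F G : Type*} [NormedAddCommGroup F] [NormedSpace ℝ F]
  [NormedAddCommGroup G] [NormedSpace ℝ G] {t s : ℝ} {V : F × G → ℂ} {z : F × G}

lemma mem_GSWaveFrontSet_iff :
    z ∈ GSWaveFrontSet t s V ↔ z ≠ 0 ∧ ¬ DilationDecaysAt t s V z := by
  refine and_congr_right fun _ => not_congr ⟨?_, ?_⟩
  · rintro ⟨U, hU, hzU, hdecay⟩
    exact ⟨U, hU.mem_nhds hzU, fun r =>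
      DilationBoundedOn.anti_rate (hdecay (max r 1) (by positivity)) (le_max_left r 1)⟩
  · rintro ⟨U, hU, hdecay⟩
    obtain ⟨U', hU'U, hU', hzU'⟩ := mem_nhds_iff.1 hU
    exact ⟨U', hU', hzU', fun r _ =>
      (hdecay r).imp fun C hC l hl w hw => hC l hl w (hU'U hw)⟩

lemma mem_GSWaveFrontSet_union_zero_of_not_dilationDecaysAt
    (hz : ¬ DilationDecaysAt t s V z) : z ∈ GSWaveFrontSet t s V ∪ {0} :=
  or_iff_not_imp_right.2 fun hz0 => mem_GSWaveFrontSet_iff.2 ⟨hz0, hz⟩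

end WaveFrontSet

theorem stmt_14_general {E E' F F' : Type*}
    [NormedAddCommGroup E] [NormedSpace ℝ E] [NormedAddCommGroup E'] [NormedSpace ℝ E']
    [NormedAddCommGroup F] [NormedSpace ℝ F] [NormedAddCommGroup F'] [NormedSpace ℝ F']
    {t s : ℝ} (ht : 0 < t) (hs : 0 < s) {Vu : E × E' → ℂ} {Vv : F × F' → ℂ}
    (hVu : HasExpGaugeGrowth t s Vu) (hVv : HasExpGaugeGrowth t s Vv)
    {V : (E × F) × (E' × F') → ℂ}
    (hV : ∀ x' x'' ξ' ξ'', V ((x', x''), (ξ', ξ'')) = Vu (x', ξ') * Vv (x'', ξ'')) :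
    GSWaveFrontSet t s V ⊆
      {z | z ≠ 0 ∧ (z.1.1, z.2.1) ∈ GSWaveFrontSet t s Vu ∪ {0} ∧
        (z.1.2, z.2.2) ∈ GSWaveFrontSet t s Vv ∪ {0}} := by
  intro z hz
  obtain ⟨hz0, hz_not_decays⟩ := mem_GSWaveFrontSet_iff.1 hz
  let p' : (E × F) × (E' × F') → E × E' := fun w => (w.1.1, w.2.1)
  let p'' : (E × F) × (E' × F') → F × F' := fun w => (w.1.2, w.2.2)
  have hp' : ContinuousAt p' z := by fun_prop
  have hp'' : ContinuousAt p'' z := by fun_prop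
  have hV_eq : V = (Vu ∘ p') * (Vv ∘ p'') := funext fun w => hV w.1.1 w.1.2 w.2.1 w.2.2
  have hu_grows : DilationGrowsAt t s (Vu ∘ p') z :=
    (hVu.dilationGrowsAt ht hs (p' z)).comp hp' fun _ _ => rfl
  have hv_grows : DilationGrowsAt t s (Vv ∘ p'') z :=
    (hVv.dilationGrowsAt ht hs (p'' z)).comp hp'' fun _ _ => rfl
  refine ⟨hz0,
    mem_GSWaveFrontSet_union_zero_of_not_dilationDecaysAt fun hu => hz_not_decays ?_,
    mem_GSWaveFrontSet_union_zero_of_not_dilationDecaysAt fun hv => hz_not_decays ?_⟩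
  · rw [hV_eq]
    exact (hu.comp hp' fun _ _ => rfl).mul_dilationGrowsAt hv_grows
  · rw [hV_eq, mul_comm]
    exact (hv.comp hp'' fun _ _ => rfl).mul_dilationGrowsAt hu_grows

/-- Tensorization (Proposition 4.4): if `u ∈ (Σ_t^s)'(ℝ^m)`, `v ∈ (Σ_t^s)'(ℝ^n)`
have STFTs `Vu`, `Vv` (satisfying the characterizing exponential growth bounds),
and `V` is the STFT of `u ⊗ v` (so it factorizes as
`V((x',x''),(ξ',ξ'')) = Vu(x',ξ') Vv(x'',ξ'')`), then
`WF^{t,s}(u ⊗ v) ⊆ {(x,ξ) ≠ 0 : (x',ξ') ∈ WF^{t,s}(u) ∪ {0}, (x'',ξ'') ∈ WF^{t,s}(v) ∪ {0}}`. -/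
theorem stmt_14 {m n : ℕ} (t s : ℝ) (ht : 0 < t) (hs : 0 < s) (hts : 1 < t + s)
    (Vu : EuclideanSpace ℝ (Fin m) × EuclideanSpace ℝ (Fin m) → ℂ)
    (Vv : EuclideanSpace ℝ (Fin n) × EuclideanSpace ℝ (Fin n) → ℂ)
    (hVu : ∃ C r : ℝ, 0 < C ∧ 0 < r ∧ ∀ z,
      ‖Vu z‖ ≤ C * Real.exp (r * (‖z.1‖ ^ (1 / t) + ‖z.2‖ ^ (1 / s))))
    (hVv : ∃ C r : ℝ, 0 < C ∧ 0 < r ∧ ∀ z,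
      ‖Vv z‖ ≤ C * Real.exp (r * (‖z.1‖ ^ (1 / t) + ‖z.2‖ ^ (1 / s))))
    (V : (EuclideanSpace ℝ (Fin m) × EuclideanSpace ℝ (Fin n)) ×
      (EuclideanSpace ℝ (Fin m) × EuclideanSpace ℝ (Fin n)) → ℂ)
    (hV : ∀ x' x'' ξ' ξ'', V ((x', x''), (ξ', ξ'')) = Vu (x', ξ') * Vv (x'', ξ'')) :
    GSWaveFrontSet t s V ⊆
      {z | z ≠ 0 ∧ (z.1.1, z.2.1) ∈ GSWaveFrontSet t s Vu ∪ {0} ∧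
        (z.1.2, z.2.2) ∈ GSWaveFrontSet t s Vv ∪ {0}} := by
  obtain ⟨Cu, ru, -, -, hVu⟩ := hVu
  obtain ⟨Cv, rv, -, -, hVv⟩ := hVv
  exact stmt_14_general ht hs ⟨Cu, ru, hVu⟩ ⟨Cv, rv, hVv⟩ hV
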